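/- Let $d$ be a positive integer with $d \equiv 1 \pmod 8$, set $\mu = 1$ if $d \equiv 1 \pmod{16}$ and $\mu = 3$ if $d \equiv 9 \pmod{16}$, and let $G = \begin{pmatrix} -8d & -\mu d \\ -\mu d & (1 - d\mu^2)/8 \end{pmatrix}$. Then there exists a vector $v \in \mathbb{Z}^2$ with $v^{T} G v = 2$ if and only if there exist odd integers $x, y$ with $x^2 - d y^2 = 16$. -/

import Mathlib

open Matrix

/-!
The vector `a δ + b (H + μ δ) / 8` equals `(b H + (8 a + μ b) δ) / 8`, so eight times its square is
`b² - d (8 a + μ b)²`. Hence vectors of square `2 n` are the solutions of `x² - d y² = 16 n` with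
`y ≡ μ x` modulo `8`. For odd `n` such a solution is odd, because the square of a vector with even
`b` is divisible by `4`. Conversely, an odd solution satisfies `y² ≡ (μ x)²` modulo `16`, hence
`y ≡ ± μ x` modulo `8`, and the sign of `y` is free.
-/

theorem two_pow_dvd_sub_or_add_of_dvd_sq_sub_sq {a b : ℤ} (ha : Odd a) (hb : Odd b) {n : ℕ}
    (h : 2 ^ (n + 2) ∣ a ^ 2 - b ^ 2) : 2 ^ (n + 1) ∣ a - b ∨ 2 ^ (n + 1) ∣ a + b := by
  obtain ⟨s, hs⟩ : 2 ∣ a - b := (ha.sub_odd hb).two_dvd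
  obtain ⟨t, ht⟩ : 2 ∣ a + b := (ha.add_odd hb).two_dvd
  have hst : 2 ^ n ∣ s * t := by
    have hfactor : a ^ 2 - b ^ 2 = s * t * 2 ^ 2 := by
      linear_combination (a + b) * hs + 2 * s * ht
    rw [hfactor, pow_add] at h
    exact Int.dvd_of_mul_dvd_mul_right (by norm_num) h
  have hsum : Odd (s + t) := by rwa [show s + t = a by linarith]
  rw [hs, ht, pow_succ']
  rcases Int.even_or_odd s with hs_even | hs_odd
  · have ht_odd : Odd t := (Int.odd_add'.mp hsum).mpr hs_even
    have hcop : IsCoprime (2 ^ n) t := (Int.isCoprime_two_left.mpr ht_odd).pow_left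
    exact .inl (mul_dvd_mul_left 2 (hcop.dvd_of_dvd_mul_right hst))
  · have hcop : IsCoprime (2 ^ n) s := (Int.isCoprime_two_left.mpr hs_odd).pow_left
    exact .inr (mul_dvd_mul_left 2 (hcop.dvd_of_dvd_mul_left hst))

/-- The Gram matrix of the lattice `N⁸_d` in the basis `δ`, `(H + μ δ) / 8`, where `H² = 8`,
`δ² = -8 d` and `H ⟂ δ`. The last entry is an integer division, exact only if
`8 ∣ 1 - d * μ ^ 2`. -/
def latticeGram (d μ : ℤ) : Matrix (Fin 2) (Fin 2) ℤ :=
  !![-8 * d, -μ * d; -μ * d, (1 - d * μ ^ 2) / 8]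

section

variable {d μ : ℤ}

theorem dotProduct_latticeGram_mulVec (v : Fin 2 → ℤ) :
    v ⬝ᵥ latticeGram d μ *ᵥ v =
      -8 * d * v 0 ^ 2 - 2 * μ * d * v 0 * v 1 + (1 - d * μ ^ 2) / 8 * v 1 ^ 2 := by
  simp only [latticeGram, mulVec, dotProduct, Fin.sum_univ_two, of_apply, cons_val_zero,
    cons_val_one]
  ring

theorem eight_mul_dotProduct_latticeGram_mulVec (hμ : 8 ∣ 1 - d * μ ^ 2) (v : Fin 2 → ℤ) :
    8 * (v ⬝ᵥ latticeGram d μ *ᵥ v) = v 1 ^ 2 - d * (8 * v 0 + μ * v 1) ^ 2 := by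
  rw [dotProduct_latticeGram_mulVec]
  linear_combination v 1 ^ 2 * Int.mul_ediv_cancel' hμ

theorem four_dvd_dotProduct_latticeGram_mulVec {v : Fin 2 → ℤ} (hv : Even (v 1)) :
    4 ∣ v ⬝ᵥ latticeGram d μ *ᵥ v := by
  obtain ⟨c, hc⟩ := hv
  rw [dotProduct_latticeGram_mulVec, hc]
  exact ⟨-2 * d * v 0 ^ 2 - μ * d * v 0 * c + (1 - d * μ ^ 2) / 8 * c ^ 2, by ring⟩

theorem odd_of_two_dvd_one_sub_mul_sq (hμ : 2 ∣ 1 - d * μ ^ 2) : Odd μ := by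
  have hodd : Odd (d * μ ^ 2) := by
    rw [Int.odd_iff]
    omega
  exact (Int.odd_pow.mp (Int.odd_mul.mp hodd).2).resolve_right two_ne_zero

theorem exists_eight_mul_add_sq_eq (hμ : 16 ∣ 1 - d * μ ^ 2) {x y : ℤ} (hx : Odd x)
    (hy : Odd y) (hxy : 16 ∣ x ^ 2 - d * y ^ 2) : ∃ a, (8 * a + μ * x) ^ 2 = y ^ 2 := by
  have hsq : 2 ^ (2 + 2) ∣ y ^ 2 - (μ * x) ^ 2 := by
    have hcomb : y ^ 2 - (μ * x) ^ 2 =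
        (1 - d * μ ^ 2) * y ^ 2 - (x ^ 2 - d * y ^ 2) * μ ^ 2 := by ring
    rw [hcomb]
    exact dvd_sub (hμ.mul_right _) (hxy.mul_right _)
  have hμ_odd : Odd μ := odd_of_two_dvd_one_sub_mul_sq (dvd_trans (by norm_num) hμ)
  rcases two_pow_dvd_sub_or_add_of_dvd_sq_sub_sq hy (hμ_odd.mul hx) hsq with ⟨a, ha⟩ | ⟨a, ha⟩
  · exact ⟨a, by rw [show 8 * a + μ * x = y by linear_combination -ha]⟩
  · exact ⟨-a, by rw [show 8 * -a + μ * x = -y by linear_combination ha, neg_sq]⟩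

theorem stmt_19_general (hμ : 16 ∣ 1 - d * μ ^ 2) {n : ℤ} (hn : Odd n) :
    (∃ v : Fin 2 → ℤ, v ⬝ᵥ latticeGram d μ *ᵥ v = 2 * n) ↔
      ∃ x y : ℤ, Odd x ∧ Odd y ∧ x ^ 2 - d * y ^ 2 = 16 * n := by
  have hμ8 : 8 ∣ 1 - d * μ ^ 2 := dvd_trans (by norm_num) hμ
  have hμ_odd : Odd μ := odd_of_two_dvd_one_sub_mul_sq (dvd_trans (by norm_num) hμ)
  constructor
  · rintro ⟨v, hv⟩
    have hv1 : Odd (v 1) := by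
      by_contra heven
      have h4 := four_dvd_dotProduct_latticeGram_mulVec (d := d) (μ := μ)
        (Int.not_odd_iff_even.mp heven)
      rw [Int.odd_iff] at hn
      omega
    have hy : Odd (8 * v 0 + μ * v 1) :=
      Even.add_odd (Even.mul_right (by decide) _) (hμ_odd.mul hv1)
    exact ⟨v 1, _, hv1, hy, by linarith [eight_mul_dotProduct_latticeGram_mulVec hμ8 v]⟩
  · rintro ⟨x, y, hx, hy, h⟩
    obtain ⟨a, ha⟩ := exists_eight_mul_add_sq_eq hμ hx hy ⟨n, h⟩
    have hvalue : 8 * (![a, x] ⬝ᵥ latticeGram d μ *ᵥ ![a, x]) = 16 * n := by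
      rw [eight_mul_dotProduct_latticeGram_mulVec hμ8, cons_val_zero, cons_val_one,
        cons_val_zero, ha, h]
    exact ⟨![a, x], by linarith⟩

end

/-- Arithmetic content of Proposition 3.1.3: the lattice `N⁸_d`
(Gram matrix `!![-8d, -μd; -μd, (1-dμ²)/8]`) contains an element of square `2`
iff the equation `x² - d y² = 16` has a solution in odd integers. -/
theorem stmt_19 (d : ℤ) (hd : 0 < d) (hd8 : d % 8 = 1) (μ : ℤ)
    (hμ1 : d % 16 = 1 → μ = 1) (hμ9 : d % 16 = 9 → μ = 3) :
    (∃ v : Fin 2 → ℤ,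
      v ⬝ᵥ (!![-8 * d, -μ * d; -μ * d, (1 - d * μ ^ 2) / 8] :
        Matrix (Fin 2) (Fin 2) ℤ).mulVec v = 2) ↔
    (∃ x y : ℤ, Odd x ∧ Odd y ∧ x ^ 2 - d * y ^ 2 = 16) := by
  have hμ : 16 ∣ 1 - d * μ ^ 2 := by
    rcases (by omega : d % 16 = 1 ∨ d % 16 = 9) with h | h
    · rw [hμ1 h]
      omega
    · rw [hμ9 h]
      omega
  exact stmt_19_general hμ odd_one
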